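/- arXiv:2511.02007 — 3 statements merged into one kernel-verified Lean document; each statement's English description precedes it below -/
import Mathlib

section
/- Let V be a vector space over ℂ, let c ∈ ℂ, and let L, L̄ : ℤ → End_ℂ(V) be two families of linear endomorphisms satisfying the Virasoro relations [L_m, L_n] = (m−n)·L_{m+n} + (c/12)·(m³−m)·δ_{m+n,0}·id_V and [L̄_m, L̄_n] = (m−n)·L̄_{m+n} + (c/12)·(m³−m)·δ_{m+n,0}·id_V for all m,n ∈ ℤ, and [L_m, L̄_n] = 0 for all m,n ∈ ℤ. Suppose D ∈ End_ℂ(V) satisfies [L_n − L̄_{−n}, D] = 0 for all n ∈ ℤ and [L_0 + L̄_0, D] = 0. Then [L_n, D] = 0 and [L̄_n, D] = 0 for all n ∈ ℤ. -/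
/-- Let `V` be a vector space over `ℂ`, `c ∈ ℂ`, and `L, L̄ : ℤ → End_ℂ(V)` two commuting
families of endomorphisms each satisfying the Virasoro relations with central charge `c`.
If `D ∈ End_ℂ(V)` satisfies `[Lₙ − L̄₋ₙ, D] = 0` for all `n` (conformality) and
`[L₀ + L̄₀, D] = 0` (translation invariance), then `[Lₙ, D] = 0 = [L̄ₙ, D]` for all `n`
(`D` is topological). -/
theorem translation_invariant_conformal_defect_is_topological
    {V : Type*} [AddCommGroup V] [Module ℂ V] (c : ℂ)
    (L Lbar : ℤ → Module.End ℂ V)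
    (hL : ∀ m n : ℤ, L m * L n - L n * L m =
      ((m : ℂ) - (n : ℂ)) • L (m + n)
        + (if m + n = 0 then (c / 12) * ((m : ℂ) ^ 3 - (m : ℂ)) else 0) • (1 : Module.End ℂ V))
    (hLbar : ∀ m n : ℤ, Lbar m * Lbar n - Lbar n * Lbar m =
      ((m : ℂ) - (n : ℂ)) • Lbar (m + n)
        + (if m + n = 0 then (c / 12) * ((m : ℂ) ^ 3 - (m : ℂ)) else 0) • (1 : Module.End ℂ V))
    (hLLbar : ∀ m n : ℤ, L m * Lbar n - Lbar n * L m = 0)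
    (D : Module.End ℂ V)
    (hconf : ∀ n : ℤ, (L n - Lbar (-n)) * D - D * (L n - Lbar (-n)) = 0)
    (htrans : (L 0 + Lbar 0) * D - D * (L 0 + Lbar 0) = 0) :
    ∀ n : ℤ, L n * D - D * L n = 0 ∧ Lbar n * D - D * Lbar n = 0 := by
  have hc : ∀ n : ℤ, Commute (L n - Lbar (-n)) D := fun n => sub_eq_zero.mp (hconf n)
  have ht : Commute (L 0 + Lbar 0) D := sub_eq_zero.mp htrans
  have h0 : Commute (L 0) D := by
    have h1 := (hc 0).add_left ht
    have h2 : L 0 - Lbar (-0) + (L 0 + Lbar 0) = (2 : ℂ) • L 0 := by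
      rw [neg_zero, two_smul]; abel
    rw [h2] at h1
    have h3 := h1.smul_left ((2 : ℂ)⁻¹)
    rwa [smul_smul, inv_mul_cancel₀ two_ne_zero, one_smul] at h3
  have hLn : ∀ n : ℤ, Commute (L n) D := by
    intro n
    by_cases hn : n = 0
    · rw [hn]; exact h0
    · have hn' : (-(n : ℂ)) ≠ 0 := neg_ne_zero.mpr (Int.cast_ne_zero.mpr hn)
      have h1 := (h0.mul_left (hc n)).sub_left ((hc n).mul_left h0)
      have h2 : L 0 * (L n - Lbar (-n)) - (L n - Lbar (-n)) * L 0 = (-(n : ℂ)) • L n := by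
        have e1 := hL 0 n
        have e2 := hLLbar 0 (-n)
        rw [zero_add, if_neg hn, zero_smul, add_zero, Int.cast_zero, zero_sub] at e1
        rw [← e1, mul_sub, sub_mul, sub_eq_zero.mp e2]
        abel
      rw [h2] at h1
      have h3 := h1.smul_left ((-(n : ℂ))⁻¹)
      rwa [smul_smul, inv_mul_cancel₀ hn', one_smul] at h3
  intro n
  refine ⟨sub_eq_zero.mpr (hLn n), sub_eq_zero.mpr ?_⟩
  have h := (hLn (-n)).sub_left (hc (-n))
  rw [sub_sub_cancel, neg_neg] at h
  exact h
end

section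
/- Suppose the triples (D, η, η̃) and (E, ζ, ζ̃) both satisfy the commutation condition for ω. Then the triple (D⊗E, T(η,ζ), T̃(η̃,ζ̃)), where (suppressing associators) T(η,ζ) = (η⊗id_E) + (id_D⊗ζ)∘(γ_D⊗id_E) : X⊗(D⊗E) → D⊗E and T̃(η̃,ζ̃) = (id_D⊗ζ̃) + (η̃⊗id_E)∘(id_D⊗δ_E⁻¹) : (D⊗E)⊗Y → D⊗E, again satisfies the commutation condition for ω. -/
open CategoryTheory MonoidalCategory

variable {M : Type*} [Category M] [MonoidalCategory M]
  [Preadditive M] [CategoryTheory.Linear ℂ M]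
  [MonoidalPreadditive M] [MonoidalLinear ℂ M]

/-- The commutation condition for a triple `(D, η, η̃)` relative to objects `(X, γ)` and
`(Y, δ)` of the Drinfeld center of `M` and a pairing `ω : X ⊗ Y ⟶ 𝟙`.  As morphisms
`(X ⊗ D) ⊗ Y ⟶ D` (with all associators and unitors written out):
`(id_D ⊗ ω)∘(γ_D ⊗ id_Y) − (ω ⊗ id_D)∘(id_X ⊗ δ_D⁻¹) = η̃∘(η ⊗ id_Y) − η∘(id_X ⊗ η̃)`. -/
def CommCond (X Y : Center M) (ω : X.1 ⊗ Y.1 ⟶ 𝟙_ M)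
    (D : M) (η : X.1 ⊗ D ⟶ D) (η' : D ⊗ Y.1 ⟶ D) : Prop :=
  ((X.2.β D).hom ▷ Y.1) ≫ (α_ D X.1 Y.1).hom ≫ (D ◁ ω) ≫ (ρ_ D).hom
      - (α_ X.1 D Y.1).hom ≫ (X.1 ◁ (Y.2.β D).inv) ≫ (α_ X.1 Y.1 D).inv
          ≫ (ω ▷ D) ≫ (λ_ D).hom
    = (η ▷ Y.1) ≫ η' - (α_ X.1 D Y.1).hom ≫ (X.1 ◁ η') ≫ η

/-- The left action `T(η, ζ) : X ⊗ (D ⊗ E) ⟶ D ⊗ E` on a tensor product of two triples: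
`T(η,ζ) = (η ⊗ id_E) + (id_D ⊗ ζ)∘(γ_D ⊗ id_E)` (with associators written out). -/
def Tact (X : Center M) {D E : M} (η : X.1 ⊗ D ⟶ D) (ζ : X.1 ⊗ E ⟶ E) :
    X.1 ⊗ (D ⊗ E) ⟶ D ⊗ E :=
  (α_ X.1 D E).inv ≫ (η ▷ E)
    + (α_ X.1 D E).inv ≫ ((X.2.β D).hom ▷ E) ≫ (α_ D X.1 E).hom ≫ (D ◁ ζ)

/-- The right action `T̃(η̃, ζ̃) : (D ⊗ E) ⊗ Y ⟶ D ⊗ E` on a tensor product of two triples: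
`T̃(η̃,ζ̃) = (id_D ⊗ ζ̃) + (η̃ ⊗ id_E)∘(id_D ⊗ δ_E⁻¹)` (with associators written out). -/
def Tact' (Y : Center M) {D E : M} (η' : D ⊗ Y.1 ⟶ D) (ζ' : E ⊗ Y.1 ⟶ E) :
    (D ⊗ E) ⊗ Y.1 ⟶ D ⊗ E :=
  (α_ D E Y.1).hom ≫ (D ◁ ζ')
    + (α_ D E Y.1).hom ≫ (D ◁ (Y.2.β E).inv) ≫ (α_ D Y.1 E).inv ≫ (η' ▷ E)

theorem aux (x y : M) (ω : x ⊗ y ⟶ 𝟙_ M)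
    (D E : M) (η : x ⊗ D ⟶ D) (η' : D ⊗ y ⟶ D)
    (ζ : x ⊗ E ⟶ E) (ζ' : E ⊗ y ⟶ E)
    (gD : x ⊗ D ⟶ D ⊗ x) (gE : x ⊗ E ⟶ E ⊗ x) (dD : D ⊗ y ⟶ y ⊗ D) (dE : E ⊗ y ⟶ y ⊗ E)
    (dX : x ⊗ y ⟶ y ⊗ x)
    (n1 : x ◁ η' ≫ gD = ((α_ x D y).inv ≫ gD ▷ y ≫ (α_ D x y).hom ≫ D ◁ dX ≫ (α_ D y x).inv)
      ≫ η' ▷ x)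
    (n2 : ζ ▷ y ≫ dE = ((α_ x E y).hom ≫ x ◁ dE ≫ (α_ x y E).inv ≫ dX ▷ E ≫ (α_ y x E).hom)
      ≫ y ◁ ζ)
    (hD : gD ▷ y ≫ (α_ D x y).hom ≫ D ◁ ω ≫ (ρ_ D).hom
        - (α_ x D y).hom ≫ x ◁ dD ≫ (α_ x y D).inv ≫ ω ▷ D ≫ (λ_ D).hom
      = η ▷ y ≫ η' - (α_ x D y).hom ≫ x ◁ η' ≫ η)
    (hE : gE ▷ y ≫ (α_ E x y).hom ≫ E ◁ ω ≫ (ρ_ E).hom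
        - (α_ x E y).hom ≫ x ◁ dE ≫ (α_ x y E).inv ≫ ω ▷ E ≫ (λ_ E).hom
      = ζ ▷ y ≫ ζ' - (α_ x E y).hom ≫ x ◁ ζ' ≫ ζ) :
    ((α_ x D E).inv ≫ gD ▷ E ≫ (α_ D x E).hom ≫ D ◁ gE ≫ (α_ D E x).inv) ▷ y
        ≫ (α_ (D ⊗ E) x y).hom ≫ (D ⊗ E) ◁ ω ≫ (ρ_ (D ⊗ E)).hom
      - (α_ x (D ⊗ E) y).hom ≫ x ◁ ((α_ D E y).hom ≫ D ◁ dE ≫ (α_ D y E).inv ≫ dD ▷ E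
          ≫ (α_ y D E).hom) ≫ (α_ x y (D ⊗ E)).inv ≫ ω ▷ (D ⊗ E) ≫ (λ_ (D ⊗ E)).hom
    = ((α_ x D E).inv ≫ η ▷ E + (α_ x D E).inv ≫ gD ▷ E ≫ (α_ D x E).hom ≫ D ◁ ζ) ▷ y
        ≫ ((α_ D E y).hom ≫ D ◁ ζ' + (α_ D E y).hom ≫ D ◁ dE ≫ (α_ D y E).inv ≫ η' ▷ E)
      - (α_ x (D ⊗ E) y).hom
        ≫ x ◁ ((α_ D E y).hom ≫ D ◁ ζ' + (α_ D E y).hom ≫ D ◁ dE ≫ (α_ D y E).inv ≫ η' ▷ E)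
        ≫ ((α_ x D E).inv ≫ η ▷ E + (α_ x D E).inv ≫ gD ▷ E ≫ (α_ D x E).hom ≫ D ◁ ζ) := by
  have wl : ∀ (Z : M) {U V : M} (f g : U ⟶ V), Z ◁ (f - g) = Z ◁ f - Z ◁ g := fun Z U V f g =>
    (tensorLeft Z).map_sub
  have wr : ∀ (Z : M) {U V : M} (f g : U ⟶ V), (f - g) ▷ Z = f ▷ Z - g ▷ Z := fun Z U V f g =>
    (tensorRight Z).map_sub
  -- E-part
  have HE := congrArg (fun f => 𝟙 ((x ⊗ (D ⊗ E)) ⊗ y) ⊗≫ gD ▷ (E ⊗ y) ⊗≫ D ◁ f) hE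
  have HD := congrArg (fun f => 𝟙 ((x ⊗ (D ⊗ E)) ⊗ y) ⊗≫ (x ⊗ D) ◁ dE ⊗≫ f ▷ E) hD
  simp only [monoidalComp, wl, wr, Preadditive.comp_sub] at HE HD
  simp only [Preadditive.comp_add, Preadditive.add_comp, MonoidalPreadditive.whiskerLeft_add,
    MonoidalPreadditive.add_whiskerRight]
  -- middle
  have e1 : 𝟙 ((x ⊗ (D ⊗ E)) ⊗ y) ⊗≫ gD ▷ (E ⊗ y) ⊗≫ D ◁
      ((α_ x E y).hom ≫ x ◁ dE ≫ (α_ x y E).inv ≫ ω ▷ E ≫ (λ_ E).hom)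
      = 𝟙 ((x ⊗ (D ⊗ E)) ⊗ y) ⊗≫ (x ⊗ D) ◁ dE ⊗≫
        (gD ▷ y ≫ (α_ D x y).hom ≫ D ◁ ω ≫ (ρ_ D).hom) ▷ E := by
    calc _ = 𝟙 ((x ⊗ (D ⊗ E)) ⊗ y) ⊗≫ (gD ▷ (E ⊗ y) ≫ (D ⊗ x) ◁ dE) ⊗≫ D ◁ ω ▷ E ⊗≫ 𝟙 _ := by
          monoidal
      _ = _ := by rw [← whisker_exchange]; monoidal
  have e2 : ((α_ x D E).inv ≫ η ▷ E) ▷ y ≫ (α_ D E y).hom ≫ D ◁ ζ'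
      = (α_ x (D ⊗ E) y).hom ≫ x ◁ ((α_ D E y).hom ≫ D ◁ ζ') ≫ (α_ x D E).inv ≫ η ▷ E := by
    calc _ = 𝟙 ((x ⊗ (D ⊗ E)) ⊗ y) ⊗≫ (η ▷ (E ⊗ y) ≫ D ◁ ζ') := by monoidal
      _ = _ := by rw [← whisker_exchange]; monoidal
  have e3 : (α_ x (D ⊗ E) y).hom ≫ x ◁ ((α_ D E y).hom ≫ D ◁ ζ') ≫
        (α_ x D E).inv ≫ gD ▷ E ≫ (α_ D x E).hom ≫ D ◁ ζ
      = 𝟙 ((x ⊗ (D ⊗ E)) ⊗ y) ⊗≫ gD ▷ (E ⊗ y) ⊗≫ D ◁ ((α_ x E y).hom ≫ x ◁ ζ' ≫ ζ) := by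
    calc _ = 𝟙 ((x ⊗ (D ⊗ E)) ⊗ y) ⊗≫ ((x ⊗ D) ◁ ζ' ≫ gD ▷ E) ⊗≫ D ◁ ζ := by monoidal
      _ = _ := by rw [whisker_exchange]; monoidal
  have e4 : ((α_ x D E).inv ≫ η ▷ E) ▷ y ≫ (α_ D E y).hom ≫ D ◁ dE ≫ (α_ D y E).inv ≫ η' ▷ E
      = 𝟙 ((x ⊗ (D ⊗ E)) ⊗ y) ⊗≫ (x ⊗ D) ◁ dE ⊗≫ (η ▷ y ≫ η') ▷ E := by
    calc _ = 𝟙 ((x ⊗ (D ⊗ E)) ⊗ y) ⊗≫ (η ▷ (E ⊗ y) ≫ D ◁ dE) ⊗≫ η' ▷ E := by monoidal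
      _ = _ := by rw [← whisker_exchange]; monoidal
  have e5 : ((α_ x D E).inv ≫ gD ▷ E ≫ (α_ D x E).hom ≫ D ◁ ζ) ▷ y ≫ (α_ D E y).hom ≫ D ◁ dE
        ≫ (α_ D y E).inv ≫ η' ▷ E
      = (α_ x (D ⊗ E) y).hom ≫ x ◁ ((α_ D E y).hom ≫ D ◁ dE ≫ (α_ D y E).inv ≫ η' ▷ E) ≫
        (α_ x D E).inv ≫ gD ▷ E ≫ (α_ D x E).hom ≫ D ◁ ζ := by
    calc _ = 𝟙 ((x ⊗ (D ⊗ E)) ⊗ y) ⊗≫ gD ▷ (E ⊗ y) ⊗≫ D ◁ (ζ ▷ y ≫ dE) ⊗≫ η' ▷ E := by monoidal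
      _ = 𝟙 ((x ⊗ (D ⊗ E)) ⊗ y) ⊗≫ (gD ▷ (E ⊗ y) ≫ (D ⊗ x) ◁ dE) ⊗≫ D ◁ dX ▷ E ⊗≫
          ((D ⊗ y) ◁ ζ ≫ η' ▷ E) := by rw [n2]; monoidal
      _ = 𝟙 ((x ⊗ (D ⊗ E)) ⊗ y) ⊗≫ (x ⊗ D) ◁ dE ⊗≫ (((α_ x D y).inv ≫ gD ▷ y ≫ (α_ D x y).hom ≫
          D ◁ dX ≫ (α_ D y x).inv) ≫ η' ▷ x) ▷ E ⊗≫ D ◁ ζ := by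
          rw [← whisker_exchange gD dE, whisker_exchange η' ζ]; monoidal
      _ = _ := by rw [← n1]; monoidal
  have e6 : ((α_ x D E).inv ≫ gD ▷ E ≫ (α_ D x E).hom ≫ D ◁ ζ) ▷ y ≫ (α_ D E y).hom ≫ D ◁ ζ'
      = 𝟙 ((x ⊗ (D ⊗ E)) ⊗ y) ⊗≫ gD ▷ (E ⊗ y) ⊗≫ D ◁ (ζ ▷ y ≫ ζ') := by monoidal
  have e7 : (α_ x (D ⊗ E) y).hom ≫ x ◁ ((α_ D E y).hom ≫ D ◁ dE ≫ (α_ D y E).inv ≫ η' ▷ E) ≫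
        (α_ x D E).inv ≫ η ▷ E
      = 𝟙 ((x ⊗ (D ⊗ E)) ⊗ y) ⊗≫ (x ⊗ D) ◁ dE ⊗≫ ((α_ x D y).hom ≫ x ◁ η' ≫ η) ▷ E := by
    monoidal
  have e8 : ((α_ x D E).inv ≫ gD ▷ E ≫ (α_ D x E).hom ≫ D ◁ gE ≫ (α_ D E x).inv) ▷ y
        ≫ (α_ (D ⊗ E) x y).hom ≫ (D ⊗ E) ◁ ω ≫ (ρ_ (D ⊗ E)).hom
      = 𝟙 ((x ⊗ (D ⊗ E)) ⊗ y) ⊗≫ gD ▷ (E ⊗ y) ⊗≫ D ◁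
        (gE ▷ y ≫ (α_ E x y).hom ≫ E ◁ ω ≫ (ρ_ E).hom) := by monoidal
  have e9 : (α_ x (D ⊗ E) y).hom ≫ x ◁ ((α_ D E y).hom ≫ D ◁ dE ≫ (α_ D y E).inv ≫ dD ▷ E
          ≫ (α_ y D E).hom) ≫ (α_ x y (D ⊗ E)).inv ≫ ω ▷ (D ⊗ E) ≫ (λ_ (D ⊗ E)).hom
      = 𝟙 ((x ⊗ (D ⊗ E)) ⊗ y) ⊗≫ (x ⊗ D) ◁ dE ⊗≫
        ((α_ x D y).hom ≫ x ◁ dD ≫ (α_ x y D).inv ≫ ω ▷ D ≫ (λ_ D).hom) ▷ E := by monoidal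
  rw [e2, e3, e4, e5, e6, e7, e8, e9]
  simp only [monoidalComp] at e1 ⊢
  rw [e1] at HE
  have := congrArg₂ (· + ·) HE HD
  simp only [sub_add_sub_cancel] at this
  rw [this]
  abel

/-- Assume the transparency condition: the composite `X ⊗ Y → Y ⊗ X → X ⊗ Y` of `γ_Y` followed
by `δ_X` is the identity.  If `(D, η, η̃)` and `(E, ζ, ζ̃)` both satisfy the commutation
condition for `ω`, then the tensor-product triple `(D ⊗ E, T(η,ζ), T̃(η̃,ζ̃))` again
satisfies the commutation condition for `ω`. -/
theorem commCond_tensor (X Y : Center M)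
    (htransp : (X.2.β Y.1).hom ≫ (Y.2.β X.1).hom = 𝟙 (X.1 ⊗ Y.1))
    (ω : X.1 ⊗ Y.1 ⟶ 𝟙_ M)
    (D E : M) (η : X.1 ⊗ D ⟶ D) (η' : D ⊗ Y.1 ⟶ D)
    (ζ : X.1 ⊗ E ⟶ E) (ζ' : E ⊗ Y.1 ⟶ E)
    (hD : CommCond X Y ω D η η') (hE : CommCond X Y ω E ζ ζ') :
    CommCond X Y ω (D ⊗ E) (Tact X η ζ) (Tact' Y η' ζ') := by
  have htr : (X.2.β Y.1).hom = (Y.2.β X.1).inv := by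
    rw [← cancel_mono (Y.2.β X.1).hom, htransp, Iso.inv_hom_id]
  have hnY : ∀ {U V : M} (f : U ⟶ V), (f ▷ Y.1) ≫ (Y.2.β V).inv = (Y.2.β U).inv ≫ Y.1 ◁ f := by
    intro U V f
    rw [Iso.comp_inv_eq, Category.assoc, HalfBraiding.naturality, Iso.inv_hom_id_assoc]
  have hmY : ∀ U V : M, (Y.2.β (U ⊗ V)).inv = (α_ _ _ _).hom ≫ (U ◁ (Y.2.β V).inv) ≫
      (α_ _ _ _).inv ≫ ((Y.2.β U).inv ▷ V) ≫ (α_ _ _ _).hom := by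
    intro U V
    rw [← cancel_epi (Y.2.β (U ⊗ V)).hom, Iso.hom_inv_id, Y.2.monoidal]
    simp [← comp_whiskerRight_assoc, ← MonoidalCategory.whiskerLeft_comp_assoc, -comp_whiskerRight, -MonoidalCategory.whiskerLeft_comp]
  have hmX := X.2.monoidal D E
  have hmXY := X.2.monoidal D Y.1
  have hmYX := hmY X.1 E
  have n1 := X.2.naturality η'
  have n2 := hnY ζ
  have hmYDE := hmY D E
  rw [hmXY, htr] at n1
  rw [hmYX] at n2
  unfold CommCond at hD hE ⊢
  unfold Tact Tact'
  rw [hmX, hmYDE]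
  clear htransp htr hmX hmXY hmYX hmYDE hmY hnY
  generalize (X.2.β D).hom = gD at *
  generalize (X.2.β E).hom = gE at *
  generalize (Y.2.β D).inv = dD at *
  generalize (Y.2.β E).inv = dE at *
  generalize (Y.2.β X.1).inv = dX at *
  generalize X.1 = x at *
  generalize Y.1 = y at *
  exact aux x y ω D E η η' ζ ζ' gD gE dD dE dX n1 n2 hD hE
end

section
/- For triples (D,η,η̃), (E,ζ,ζ̃), (F,ξ,ξ̃) satisfying the commutation condition, the associator α_{D,E,F} : (D⊗E)⊗F → D⊗(E⊗F) of M intertwines the iterated tensor-product actions: α_{D,E,F}∘T(T(η,ζ),ξ) = T(η,T(ζ,ξ))∘(id_X⊗α_{D,E,F}) and α_{D,E,F}∘T̃(T̃(η̃,ζ̃),ξ̃) = T̃(η̃,T̃(ζ̃,ξ̃))∘(α_{D,E,F}⊗id_Y). In other words, the associator of M is a morphism ((D,η,η̃)⊛(E,ζ,ζ̃))⊛(F,ξ,ξ̃) → (D,η,η̃)⊛((E,ζ,ζ̃)⊛(F,ξ,ξ̃)) in M_ω. -/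
open CategoryTheory MonoidalCategory

variable {M : Type*} [Category M] [MonoidalCategory M]
  [Preadditive M] [CategoryTheory.Linear ℂ M]
  [MonoidalPreadditive M] [MonoidalLinear ℂ M]

/-- For triples `(D,η,η̃)`, `(E,ζ,ζ̃)`, `(F,ξ,ξ̃)` satisfying the commutation condition, the
associator `α_{D,E,F}` of `M` intertwines the iterated tensor-product actions:
`α∘T(T(η,ζ),ξ) = T(η,T(ζ,ξ))∘(id_X ⊗ α)` and
`α∘T̃(T̃(η̃,ζ̃),ξ̃) = T̃(η̃,T̃(ζ̃,ξ̃))∘(α ⊗ id_Y)`; i.e. the associator is a morphism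
`((D,η,η̃)⊛(E,ζ,ζ̃))⊛(F,ξ,ξ̃) ⟶ (D,η,η̃)⊛((E,ζ,ζ̃)⊛(F,ξ,ξ̃))` in `M_ω`. -/
theorem associator_is_Momega_morphism (X Y : Center M) (ω : X.1 ⊗ Y.1 ⟶ 𝟙_ M)
    (D E F : M) (η : X.1 ⊗ D ⟶ D) (η' : D ⊗ Y.1 ⟶ D)
    (ζ : X.1 ⊗ E ⟶ E) (ζ' : E ⊗ Y.1 ⟶ E)
    (ξ : X.1 ⊗ F ⟶ F) (ξ' : F ⊗ Y.1 ⟶ F)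
    (hD : CommCond X Y ω D η η') (hE : CommCond X Y ω E ζ ζ')
    (hF : CommCond X Y ω F ξ ξ') :
    Tact X (Tact X η ζ) ξ ≫ (α_ D E F).hom
        = (X.1 ◁ (α_ D E F).hom) ≫ Tact X η (Tact X ζ ξ) ∧
    Tact' Y (Tact' Y η' ζ') ξ' ≫ (α_ D E F).hom
        = ((α_ D E F).hom ▷ Y.1) ≫ Tact' Y η' (Tact' Y ζ' ξ') := by
  constructor
  · simp only [Tact, HalfBraiding.monoidal, Preadditive.add_comp, Preadditive.comp_add,
      MonoidalPreadditive.add_whiskerRight, MonoidalPreadditive.whiskerLeft_add, add_assoc]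
    congr 1
    · monoidal
    · congr 1
      · monoidal
      · monoidal
  · have hinv : (Y.2.β (E ⊗ F)).inv = (α_ _ _ _).hom ≫ (E ◁ (Y.2.β F).inv) ≫
        (α_ _ _ _).inv ≫ ((Y.2.β E).inv ▷ F) ≫ (α_ _ _ _).hom := by
      rw [← cancel_epi (Y.2.β (E ⊗ F)).hom, Iso.hom_inv_id, HalfBraiding.monoidal]
      simp
    simp only [Tact', hinv, Preadditive.add_comp, Preadditive.comp_add,
      MonoidalPreadditive.add_whiskerRight, MonoidalPreadditive.whiskerLeft_add, add_assoc]
    congr 1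
    · monoidal
    · congr 1
      · monoidal
      · monoidal
end
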